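/- arXiv:math-ph/0311041 — 2 statements merged into one kernel-verified Lean document; each statement's English description precedes it below -/
import Mathlib

section
/- Assume n ≤ m. For every integer i with 1 ≤ i ≤ 2N−1 and i ≠ N there exist complex numbers a₀,…,a_{m+n} with a₀ = 1 such that both polynomials q¹ᵢ = ∑_{s=0}^{m+n} aₛ·z^{(m+n−s)N+i}·w^{Ns} and q²ᵢ = ∑_{s=0}^{m+n} \overline{aₛ}·w^{(m+n−s)N+i}·z^{Ns} are quasi-invariants of the dihedral system I₂(2N) with multiplicities (m,n). -/
open MvPolynomial Finset

noncomputable section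

/-- The polynomial ring `R = ℂ[z,w]`. -/
abbrev R2 : Type := MvPolynomial (Fin 2) ℂ

/-- `z`, the first variable. -/
def zP : R2 := X 0

/-- `w`, the second variable (playing the role of `z̄`). -/
def wP : R2 := X 1

/-- `ε = exp(πi/N)`, a primitive `2N`-th root of unity. -/
def eps (N : ℕ) : ℂ := Complex.exp ((Real.pi : ℂ) * Complex.I / (N : ℂ))

/-- The reflection `σⱼ : z ↦ ε^j w, w ↦ ε^{-j} z` as a `ℂ`-algebra endomorphism. -/
def dihRefl (N j : ℕ) : R2 →ₐ[ℂ] R2 :=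
  aeval (fun k : Fin 2 => if k = 0 then C (eps N ^ j) * X 1 else C (eps N ^ (-(j : ℤ))) * X 0)

/-- The multiplicity `mⱼ`: `m` for even `j`, `n` for odd `j`. -/
def mult (m n j : ℕ) : ℕ := if Even j then m else n

/-- Quasi-invariance for the dihedral system `I₂(2N)` with multiplicities `(m,n)`. -/
def IsQuasiInv (N m n : ℕ) (p : R2) : Prop :=
  ∀ j < 2 * N, (zP - C (eps N ^ j) * wP) ^ (2 * mult m n j + 1) ∣ dihRefl N j p - p


theorem aux_moment (K κ : ℕ) (v y : ℕ → ℝ) (h : ℝ) (hh : h ≠ 0)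
    (H : ∀ k < κ, ∑ s ∈ range K, v s * ((y s + h) ^ (2 * k) - (y s - h) ^ (2 * k)) = 0) :
    ∀ k, k + 1 < κ → ∑ s ∈ range K, v s * y s ^ (2 * k + 1) = 0 := by
  intro k
  induction k using Nat.strong_induction_on with
  | _ k ih =>
    intro hk
    have h1 := H (k + 1) hk
    have h2 : ∀ s, (y s + h) ^ (2 * (k + 1)) - (y s - h) ^ (2 * (k + 1)) =
        ∑ i ∈ range (2 * (k + 1) + 1), (h ^ (2 * (k + 1) - i) - (-h) ^ (2 * (k + 1) - i)) *
          ((2 * (k + 1)).choose i : ℝ) * y s ^ i := by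
      intro s
      rw [sub_eq_add_neg (y s) h, add_pow, add_pow, ← Finset.sum_sub_distrib]
      refine Finset.sum_congr rfl fun i _ => ?_
      ring
    simp_rw [h2, Finset.mul_sum] at h1
    rw [Finset.sum_comm] at h1
    rw [Finset.sum_eq_single (2 * k + 1)] at h1
    · have e1 : 2 * (k + 1) - (2 * k + 1) = 1 := by omega
      rw [e1] at h1
      have e2 : ∑ s ∈ range K, v s * ((h ^ 1 - (-h) ^ 1) *
          ((2 * (k + 1)).choose (2 * k + 1) : ℝ) * y s ^ (2 * k + 1)) =
          (2 * h * ((2 * (k + 1)).choose (2 * k + 1) : ℝ)) *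
            ∑ s ∈ range K, v s * y s ^ (2 * k + 1) := by
        rw [Finset.mul_sum]
        refine Finset.sum_congr rfl fun s _ => ?_
        ring
      rw [e2] at h1
      have e3 : ((2 * (k + 1)).choose (2 * k + 1) : ℝ) ≠ 0 := by
        have := Nat.choose_pos (show 2 * k + 1 ≤ 2 * (k + 1) by omega)
        positivity
      rcases mul_eq_zero.1 h1 with h3 | h3
      · exact absurd h3 (by positivity)
      · exact h3
    · intro i hi hne
      rw [Finset.mem_range] at hi
      rcases Nat.even_or_odd' i with ⟨j, rfl | rfl⟩
      · have : Even (2 * (k + 1) - 2 * j) := ⟨k + 1 - j, by omega⟩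
        rw [this.neg_pow]
        simp
      · have hj : j < k := by omega
        have := ih j hj (by omega)
        have e2 : ∀ w : ℝ, ∑ s ∈ range K, v s * (w * y s ^ (2 * j + 1)) =
            w * ∑ s ∈ range K, v s * y s ^ (2 * j + 1) := by
          intro w
          rw [Finset.mul_sum]
          refine Finset.sum_congr rfl fun s _ => ?_
          ring
        rw [e2, this, mul_zero]
    · intro hn
      exact absurd (Finset.mem_range.2 (by omega)) hn

/-- partial sums with step two -/
def stepSum (b : ℕ → ℝ) : ℕ → ℝ
  | 0 => b 0
  | 1 => b 1
  | (s + 2) => b (s + 2) + stepSum b s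

theorem aux_parts (b φ : ℕ → ℝ) (K : ℕ) :
    ∑ s ∈ range (K + 2), b s * φ s =
      ∑ s ∈ range K, stepSum b s * (φ s - φ (s + 2)) + stepSum b K * φ K
        + stepSum b (K + 1) * φ (K + 1) := by
  induction K with
  | zero => simp [Finset.sum_range_succ, stepSum]
  | succ K ih =>
    rw [Finset.sum_range_succ, ih, Finset.sum_range_succ _ K, stepSum]
    ring

theorem aux_unique (h : ℝ) (hh : h ≠ 0) (d : ℕ) : ∀ (n : ℕ) (x : ℝ) (a : ℕ → ℝ),
    (∀ k : ℤ, 2 * x ≠ h * k) → a 0 = 0 →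
    (∀ k < n + d, ∑ s ∈ range (2 * n + d + 1), a s * (x - h * s) ^ (2 * k + 1) = 0) →
    (∀ k < n, ∑ s ∈ range (2 * n + d + 1), (-1) ^ s * a s * (x - h * s) ^ (2 * k + 1) = 0) →
    ∀ s < 2 * n + d + 1, a s = 0 := by
  intro n
  induction n with
  | zero =>
    intro x a hx ha H _ s hs
    have hc : ∀ s : ℕ, x - h * s ≠ 0 := by
      intro s e
      apply hx (2 * s)
      push_cast
      linarith
    have key := Matrix.eq_zero_of_forall_pow_sum_mul_pow_eq_zero
      (f := fun j : Fin d => (x - h * ((j : ℕ) + 1 : ℕ)) ^ 2)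
      (v := fun j : Fin d => a ((j : ℕ) + 1) * (x - h * ((j : ℕ) + 1 : ℕ))) ?_ ?_
    · rcases s with _ | s
      · exact ha
      · have := congrFun key ⟨s, by omega⟩
        simp only [Pi.zero_apply] at this
        exact (mul_eq_zero.1 this).resolve_right (hc _)
    · intro j l e
      simp only at e
      rcases sq_eq_sq_iff_eq_or_eq_neg.1 e with e | e
      · have : ((j : ℕ) : ℝ) = (l : ℕ) := by
          have := mul_left_cancel₀ hh (sub_right_injective e)
          push_cast at this
          linarith
        exact Fin.ext (by exact_mod_cast this)
      · exfalso
        apply hx ((j : ℕ) + 1 + ((l : ℕ) + 1))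
        push_cast at e ⊢
        linarith
    · intro k
      have := H k (by have := k.2; omega)
      rw [Nat.mul_zero, Nat.zero_add, Finset.sum_range_succ', ha] at this
      rw [zero_mul, add_zero, Finset.sum_range] at this
      rw [← this]
      refine Finset.sum_congr rfl fun j _ => ?_
      rw [← pow_mul]
      ring
  | succ n ih =>
    intro x a hx ha H1 H2
    have hc : ∀ s : ℕ, x - h * s ≠ 0 := by
      intro s e
      apply hx (2 * s)
      push_cast
      linarith
    set b : ℕ → ℝ := fun s => a s * (x - h * s) with hb
    set g := stepSum b with hg
    have eM : 2 * (n + 1) + d + 1 = (2 * n + d + 1) + 2 := by ring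
    rw [eM] at H1 H2 ⊢
    set K := 2 * n + d + 1 with hK
    have z1 := H1 0 (by omega)
    have z2 := H2 0 (by omega)
    have p1 := aux_parts b (fun _ => 1) K
    have p2 := aux_parts b (fun s => (-1) ^ s) K
    have q1 : ∑ s ∈ range (K + 2), b s * (fun _ => (1 : ℝ)) s = 0 := by
      rw [← z1]
      refine Finset.sum_congr rfl fun s _ => ?_
      simp [hb]
    have q2 : ∑ s ∈ range (K + 2), b s * (fun s => (-1 : ℝ) ^ s) s = 0 := by
      rw [← z2]
      refine Finset.sum_congr rfl fun s _ => ?_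
      simp only [hb]
      ring
    rw [q1] at p1
    rw [q2] at p2
    simp only [pow_add, sub_self, mul_zero, Finset.sum_const_zero, ← hg] at p1 p2
    norm_num at p1 p2
    have hs : ((-1 : ℝ) ^ K) ^ 2 = 1 := by rw [← pow_mul, mul_comm, pow_mul]; norm_num
    have p3 : g K - g (K + 1) = 0 := by
      have : (g K - g (K + 1)) * ((-1 : ℝ) ^ K) ^ 2 = 0 := by
        linear_combination -((-1 : ℝ) ^ K) * p2
      rwa [hs, mul_one] at this
    have gK : g K = 0 := by linarith
    have gK1 : g (K + 1) = 0 := by linarith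
    have trans : ∀ (τ : ℝ) (κ : ℕ), τ ^ 2 = 1 →
        (∀ k < κ, ∑ s ∈ range (K + 2), τ ^ s * a s * (x - h * s) ^ (2 * k + 1) = 0) →
        ∀ k, k + 1 < κ → ∑ s ∈ range K, τ ^ s * g s * ((x - h) - h * s) ^ (2 * k + 1) = 0 := by
      intro τ κ hτ HH
      apply aux_moment K κ (fun s => τ ^ s * g s) (fun s => (x - h) - h * s) h hh
      intro k hk
      have p := aux_parts b (fun s => τ ^ s * (x - h * s) ^ (2 * k)) K
      have q : ∑ s ∈ range (K + 2), b s * (fun s : ℕ => τ ^ s * (x - h * s) ^ (2 * k)) s = 0 := by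
        rw [← HH k hk]
        refine Finset.sum_congr rfl fun s _ => ?_
        simp only [hb]
        ring
      rw [q, ← hg, gK, gK1, zero_mul, zero_mul, add_zero, add_zero] at p
      rw [p]
      refine Finset.sum_congr rfl fun s _ => ?_
      have e1 : x - h - h * (s : ℝ) + h = x - h * s := by ring
      have e2 : x - h - h * (s : ℝ) - h = x - h * ((s + 2 : ℕ) : ℝ) := by push_cast; ring
      rw [e1, e2, pow_add, hτ]
      ring
    have g0 : ∀ s < K, g s = 0 := by
      apply ih (x - h) g
      · intro k e
        apply hx (k + 2)
        push_cast
        linarith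
      · simp [hg, stepSum, hb, ha]
      · intro k hk
        have := trans 1 (n + 1 + d) (by norm_num) (by simpa using H1) k (by omega)
        simpa using this
      · intro k hk
        exact trans (-1) (n + 1) (by norm_num) H2 k (by omega)
    have g00 : ∀ s < K + 2, g s = 0 := by
      intro s hs
      rcases Nat.lt_or_ge s K with h1 | h1
      · exact g0 s h1
      · have : s = K ∨ s = K + 1 := by omega
        rcases this with rfl | rfl <;> assumption
    intro s hs
    have hbs : b s = 0 := by
      rcases s with _ | _ | s
      · exact g00 0 hs
      · exact g00 1 hs
      · have e1 := g00 (s + 2) hs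
        have e2 := g00 s (by omega)
        rw [hg, stepSum] at e1
        rw [hg] at e2
        rw [e2, add_zero] at e1
        exact e1
    exact (mul_eq_zero.1 hbs).resolve_right (hc s)

theorem aux_exists (h : ℝ) (hh : h ≠ 0) (m n : ℕ) (hnm : n ≤ m) (x : ℝ)
    (hx : ∀ k : ℤ, 2 * x ≠ h * k) :
    ∃ a : ℕ → ℝ, a 0 = 1 ∧
    (∀ k < m, ∑ s ∈ range (m + n + 1), a s * (x - h * s) ^ (2 * k + 1) = 0) ∧
    (∀ k < n, ∑ s ∈ range (m + n + 1), (-1) ^ s * a s * (x - h * s) ^ (2 * k + 1) = 0) := by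
  let A : Matrix (Fin m ⊕ Fin n) (Fin (m + n + 1)) ℝ := Matrix.of fun r s =>
    Sum.elim (fun k : Fin m => (x - h * (s : ℕ)) ^ (2 * (k : ℕ) + 1))
      (fun k : Fin n => (-1) ^ (s : ℕ) * (x - h * (s : ℕ)) ^ (2 * (k : ℕ) + 1)) r
  have hker : LinearMap.ker A.mulVecLin ≠ ⊥ := by
    apply LinearMap.ker_ne_bot_of_finrank_lt
    simp
  obtain ⟨v, hv, hv0⟩ := (Submodule.ne_bot_iff _).1 hker
  rw [LinearMap.mem_ker, Matrix.mulVecLin_apply] at hv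
  let a : ℕ → ℝ := fun s => if hs : s < m + n + 1 then v ⟨s, hs⟩ else 0
  have H1 : ∀ k < m, ∑ s ∈ range (m + n + 1), a s * (x - h * s) ^ (2 * k + 1) = 0 := by
    intro k hk
    have := congrFun hv (Sum.inl ⟨k, hk⟩)
    simp only [Matrix.mulVec, dotProduct, A, Matrix.of_apply, Sum.elim_inl, Pi.zero_apply] at this
    rw [Finset.sum_range, ← this]
    refine Finset.sum_congr rfl fun s _ => ?_
    simp only [a, s.2, dif_pos]
    ring
  have H2 : ∀ k < n, ∑ s ∈ range (m + n + 1),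
      (-1) ^ s * a s * (x - h * s) ^ (2 * k + 1) = 0 := by
    intro k hk
    have := congrFun hv (Sum.inr ⟨k, hk⟩)
    simp only [Matrix.mulVec, dotProduct, A, Matrix.of_apply, Sum.elim_inr, Pi.zero_apply] at this
    rw [Finset.sum_range, ← this]
    refine Finset.sum_congr rfl fun s _ => ?_
    simp only [a, s.2, dif_pos]
    ring
  have h0 : a 0 ≠ 0 := by
    intro h0
    apply hv0
    obtain ⟨d, rfl⟩ := Nat.exists_eq_add_of_le hnm
    have e : n + d + n + 1 = 2 * n + d + 1 := by ring
    have := aux_unique h hh d n x a hx h0 (by rw [← e]; exact H1) (by rw [← e]; exact H2)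
    funext s
    have := this s (by have := s.2; omega)
    simp only [a, s.2, dif_pos] at this
    exact this
  refine ⟨fun s => a s / a 0, div_self h0, fun k hk => ?_, fun k hk => ?_⟩
  · have := H1 k hk
    rw [← mul_right_inj' (inv_ne_zero h0), mul_zero, Finset.mul_sum] at this
    rw [← this]
    refine Finset.sum_congr rfl fun s _ => ?_
    ring
  · have := H2 k hk
    rw [← mul_right_inj' (inv_ne_zero h0), mul_zero, Finset.mul_sum] at this
    rw [← this]
    refine Finset.sum_congr rfl fun s _ => ?_
    ring

theorem aux_poly (K μ : ℕ) (e c : ℕ → ℝ)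
    (H : ∀ k < μ, ∑ s ∈ range K, e s * c s ^ (2 * k + 1) = 0)
    (r : Polynomial ℝ) (hr : r.natDegree < 2 * μ + 1) :
    ∑ s ∈ range K, e s * (r.eval (c s) - r.eval (-c s)) = 0 := by
  simp_rw [Polynomial.eval_eq_sum_range' hr, ← Finset.sum_sub_distrib, Finset.mul_sum]
  rw [Finset.sum_comm]
  refine Finset.sum_eq_zero fun i hi => ?_
  rw [Finset.mem_range] at hi
  rcases Nat.even_or_odd' i with ⟨j, rfl | rfl⟩
  · simp [pow_mul]
  · have := H j (by omega)
    have e2 : ∑ s ∈ range K, e s * (r.coeff (2 * j + 1) * c s ^ (2 * j + 1) -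
        r.coeff (2 * j + 1) * (-c s) ^ (2 * j + 1)) =
        2 * r.coeff (2 * j + 1) * ∑ s ∈ range K, e s * c s ^ (2 * j + 1) := by
      rw [Finset.mul_sum]
      refine Finset.sum_congr rfl fun s _ => ?_
      rw [Odd.neg_pow ⟨j, rfl⟩]
      ring
    rw [e2, this, mul_zero]

theorem aux_choose (K μ D : ℕ) (e c : ℕ → ℝ) (A B : ℕ → ℕ)
    (hAB : ∀ s < K, A s + B s = D) (hc : ∀ s < K, c s = (A s : ℝ) - B s)
    (H : ∀ k < μ, ∑ s ∈ range K, e s * c s ^ (2 * k + 1) = 0)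
    (k : ℕ) (hk : k < 2 * μ + 1) :
    ∑ s ∈ range K, e s * (((A s).choose k : ℝ) - ((B s).choose k : ℝ)) = 0 := by
  have key := aux_poly K μ e c H ((descPochhammer ℝ k).comp
    (Polynomial.C (1 / 2) * Polynomial.X + Polynomial.C ((D : ℝ) / 2))) ?_
  · have hf : ((k.factorial : ℕ) : ℝ) ≠ 0 := by exact_mod_cast k.factorial_ne_zero
    rw [← mul_right_inj' hf, mul_zero, ← key, Finset.mul_sum]
    refine Finset.sum_congr rfl fun s hs => ?_
    rw [Finset.mem_range] at hs
    have h1 : ((A s : ℕ) : ℝ) + B s = D := by exact_mod_cast hAB s hs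
    have h2 := hc s hs
    simp only [Polynomial.eval_comp, Polynomial.eval_add, Polynomial.eval_mul,
      Polynomial.eval_C, Polynomial.eval_X]
    have e1 : 1 / 2 * c s + (D : ℝ) / 2 = (A s : ℕ) := by rw [h2, ← h1]; ring
    have e2 : 1 / 2 * (-c s) + (D : ℝ) / 2 = (B s : ℕ) := by rw [h2, ← h1]; ring
    rw [e1, e2, descPochhammer_eval_eq_descFactorial, descPochhammer_eval_eq_descFactorial,
      Nat.descFactorial_eq_factorial_mul_choose, Nat.descFactorial_eq_factorial_mul_choose]
    push_cast
    ring
  · refine lt_of_le_of_lt Polynomial.natDegree_comp_le ?_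
    rw [descPochhammer_natDegree]
    have := Polynomial.natDegree_linear_le (a := (1 / 2 : ℝ)) (b := (D : ℝ) / 2)
    nlinarith

theorem aux_expand (T W : R2) (A B D : ℕ) (h : A + B = D) :
    (T + W) ^ A * W ^ B = ∑ k ∈ range (D + 1), C ((A.choose k : ℕ) : ℂ) * T ^ k * W ^ (D - k) := by
  subst h
  rw [add_pow, Finset.sum_mul]
  rw [← Finset.sum_subset (Finset.range_mono (show A + 1 ≤ A + B + 1 by omega))]
  · refine Finset.sum_congr rfl fun k hk => ?_
    rw [Finset.mem_range] at hk
    have : A + B - k = (A - k) + B := by omega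
    rw [this, pow_add, map_natCast]
    ring
  · intro k _ hk
    rw [Finset.mem_range] at hk
    rw [Nat.choose_eq_zero_of_lt (by omega)]
    simp

theorem aux_dvd (K μ D : ℕ) (e c : ℕ → ℝ) (A B : ℕ → ℕ)
    (hAB : ∀ s < K, A s + B s = D) (hc : ∀ s < K, c s = (A s : ℝ) - B s)
    (H : ∀ k < μ, ∑ s ∈ range K, e s * c s ^ (2 * k + 1) = 0) (Z W : R2) :
    (Z - W) ^ (2 * μ + 1) ∣
      ∑ s ∈ range K, C ((e s : ℝ) : ℂ) * (Z ^ A s * W ^ B s - Z ^ B s * W ^ A s) := by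
  have e1 : ∑ s ∈ range K, C ((e s : ℝ) : ℂ) * (Z ^ A s * W ^ B s - Z ^ B s * W ^ A s) =
      ∑ k ∈ range (D + 1), C ((∑ s ∈ range K,
        e s * (((A s).choose k : ℝ) - ((B s).choose k : ℝ)) : ℝ) : ℂ) *
          (Z - W) ^ k * W ^ (D - k) := by
    have : ∀ s ∈ range K, C ((e s : ℝ) : ℂ) * (Z ^ A s * W ^ B s - Z ^ B s * W ^ A s) =
      ∑ k ∈ range (D + 1), C ((
        e s * (((A s).choose k : ℝ) - ((B s).choose k : ℝ)) : ℝ) : ℂ) *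
          (Z - W) ^ k * W ^ (D - k) := by
      intro s hs
      have hs := hAB s (Finset.mem_range.1 hs)
      have x1 := aux_expand (Z - W) W (A s) (B s) D hs
      have x2 := aux_expand (Z - W) W (B s) (A s) D (by omega)
      rw [sub_add_cancel] at x1 x2
      rw [x1, x2, ← Finset.sum_sub_distrib, Finset.mul_sum]
      refine Finset.sum_congr rfl fun k _ => ?_
      push_cast
      rw [map_mul, map_sub]
      ring
    rw [Finset.sum_congr rfl this, Finset.sum_comm]
    refine Finset.sum_congr rfl fun k _ => ?_
    rw [Complex.ofReal_sum, map_sum, Finset.sum_mul, Finset.sum_mul]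
  rw [e1]
  refine Finset.dvd_sum fun k _ => ?_
  rcases Nat.lt_or_ge k (2 * μ + 1) with hk | hk
  · rw [aux_choose K μ D e c A B hAB hc H k hk]
    simp
  · exact Dvd.dvd.mul_right (Dvd.dvd.mul_left (pow_dvd_pow _ hk) _) _

theorem eps_ne (N : ℕ) : eps N ≠ 0 := Complex.exp_ne_zero _

theorem eps_pow (N : ℕ) (hN : 1 ≤ N) : eps N ^ N = -1 := by
  unfold eps
  rw [← Complex.exp_nat_mul, mul_div_cancel₀, Complex.exp_pi_mul_I]
  exact_mod_cast (by omega : N ≠ 0)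

theorem dihRefl_z (N j : ℕ) : dihRefl N j zP = C (eps N ^ j) * wP := by
  simp [dihRefl, zP, wP]

theorem dihRefl_w (N j : ℕ) : dihRefl N j wP = C ((eps N ^ j)⁻¹) * zP := by
  simp [dihRefl, zP, wP]

theorem dihRefl_C (N j : ℕ) (a : ℂ) : dihRefl N j (C a) = C a := by
  simp [dihRefl]

theorem exists_quasiInvariants_q1i_q2i (N m n : ℕ) (hN : 1 ≤ N) (hnm : n ≤ m) :
    ∀ i : ℕ, 1 ≤ i → i ≤ 2 * N - 1 → i ≠ N →
      ∃ a : ℕ → ℂ, a 0 = 1 ∧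
        IsQuasiInv N m n
          (∑ s ∈ Finset.range (m + n + 1),
            C (a s) * zP ^ ((m + n - s) * N + i) * wP ^ (N * s)) ∧
        IsQuasiInv N m n
          (∑ s ∈ Finset.range (m + n + 1),
            C (starRingEnd ℂ (a s)) * wP ^ ((m + n - s) * N + i) * zP ^ (N * s)) := by
  intro i hi1 hi2 hiN
  have hNr : (N : ℝ) ≠ 0 := by exact_mod_cast (by omega : N ≠ 0)
  obtain ⟨a, ha0, H1, H2⟩ := aux_exists (2 * N) (by positivity) m n hnm
    ((m + n) * N + i) (by
      intro k e
      have e' : (i : ℤ) = N * (k - (m + n)) := by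
        have : (i : ℝ) = N * (k - (m + n)) := by linarith
        exact_mod_cast this
      obtain ⟨t, ht⟩ : ∃ t : ℤ, t = k - (m + n) := ⟨_, rfl⟩
      rw [← ht] at e'
      have t1 : 0 < t := by
        by_contra hcon
        have : (N : ℤ) * t ≤ 0 := mul_nonpos_of_nonneg_of_nonpos (by omega) (by omega)
        omega
      have t2 : t < 2 := by
        by_contra hcon
        have : (N : ℤ) * 2 ≤ N * t := mul_le_mul_of_nonneg_left (by omega) (by omega)
        omega
      have t3 : t = 1 := by omega
      rw [t3] at e'
      omega)
  have hdvd : ∀ j : ℕ, ∀ Z W : R2, (Z - W) ^ (2 * mult m n j + 1) ∣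
      ∑ s ∈ range (m + n + 1), C ((((-1) ^ (j * s) * a s : ℝ)) : ℂ) *
        (Z ^ ((m + n - s) * N + i) * W ^ (N * s) - Z ^ (N * s) * W ^ ((m + n - s) * N + i)) := by
    intro j Z W
    refine aux_dvd (m + n + 1) (mult m n j) ((m + n) * N + i) (fun s => (-1) ^ (j * s) * a s)
      (fun s => (m + n) * N + i - 2 * N * s) (fun s => (m + n - s) * N + i) (fun s => N * s)
      ?_ ?_ ?_ Z W
    · intro s hs
      obtain ⟨t, ht⟩ : ∃ t, m + n = s + t := Nat.exists_eq_add_of_le (by omega)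
      simp only [ht, Nat.add_sub_cancel_left]
      ring
    · intro s hs
      have hs' : s ≤ m + n := by omega
      push_cast [Nat.cast_sub hs']
      ring
    · intro k hk
      unfold mult at hk
      split_ifs at hk with hj
      · rw [← H1 k hk]
        refine Finset.sum_congr rfl fun s _ => ?_
        simp only [pow_mul, hj.neg_one_pow, one_pow, one_mul]
      · rw [← H2 k hk]
        refine Finset.sum_congr rfl fun s _ => ?_
        simp only [pow_mul, (Nat.not_even_iff_odd.1 hj).neg_one_pow]
  refine ⟨fun s => (a s : ℂ), by simp [ha0], fun j _ => ?_, fun j _ => ?_⟩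
  · set ω := eps N ^ j with hω
    have hω0 : ω ≠ 0 := pow_ne_zero _ (eps_ne N)
    have hωN : ω ^ N = (-1) ^ j := by rw [hω, ← pow_mul, mul_comm, pow_mul, eps_pow N hN]
    convert (hdvd j zP (C ω * wP)).mul_left (-1) using 1
    rw [map_sum, ← Finset.sum_sub_distrib, Finset.mul_sum]
    refine Finset.sum_congr rfl fun s _ => ?_
    simp only [map_mul, map_pow, dihRefl_z, dihRefl_w, dihRefl_C, ← hω]
    have hB : ω ^ (N * s) = (-1) ^ (j * s) := by rw [pow_mul, hωN, ← pow_mul]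
    have hsq : ((-1 : ℂ) ^ (j * s)) * (-1) ^ (j * s) = 1 := by
      rw [← mul_pow]; norm_num
    have hB' : (ω⁻¹) ^ (N * s) = (-1) ^ (j * s) := by
      rw [inv_pow, hB]
      exact inv_eq_of_mul_eq_one_left hsq
    push_cast
    simp only [mul_pow, ← C_pow, hB, hB', C_mul]
    have hC : (C ((-1 : ℂ) ^ (j * s)) : R2) * C ((-1) ^ (j * s)) = 1 := by
      rw [← C_mul, hsq, C_1]
    linear_combination (C (a s : ℂ) * zP ^ ((m + n - s) * N + i) * wP ^ (N * s)) * hC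
  · set ω := eps N ^ j with hω
    have hω0 : ω ≠ 0 := pow_ne_zero _ (eps_ne N)
    have hωN : ω ^ N = (-1) ^ j := by rw [hω, ← pow_mul, mul_comm, pow_mul, eps_pow N hN]
    convert (hdvd j zP (C ω * wP)).mul_left (C (((-1) ^ (j * (m + n)) * ω ^ i)⁻¹)) using 1
    rw [map_sum, ← Finset.sum_sub_distrib, Finset.mul_sum]
    refine Finset.sum_congr rfl fun s hs => ?_
    have hs' : s ≤ m + n := by rw [Finset.mem_range] at hs; omega
    simp only [map_mul, map_pow, dihRefl_z, dihRefl_w, dihRefl_C, ← hω, Complex.conj_ofReal]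
    have hB : ω ^ (N * s) = (-1) ^ (j * s) := by rw [pow_mul, hωN, ← pow_mul]
    have hsq : ∀ s, ((-1 : ℂ) ^ (j * s)) * (-1) ^ (j * s) = 1 := by
      intro s
      rw [← mul_pow]; norm_num
    have hA : ω ^ ((m + n - s) * N + i) = (-1) ^ (j * s) * ((-1) ^ (j * (m + n)) * ω ^ i) := by
      obtain ⟨t, ht⟩ : ∃ t, m + n = s + t := Nat.exists_eq_add_of_le hs'
      rw [ht, Nat.add_sub_cancel_left, pow_add, mul_comm t N, pow_mul, hωN, ← pow_mul, mul_add,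
        pow_add]
      linear_combination (-(-1) ^ (j * t) * ω ^ i) * hsq s
    have hκ : (-1) ^ (j * (m + n)) * ω ^ i ≠ 0 :=
      mul_ne_zero (pow_ne_zero _ (by norm_num)) (pow_ne_zero _ hω0)
    set κ := (-1) ^ (j * (m + n)) * ω ^ i with hκd
    have hA' : (ω⁻¹) ^ ((m + n - s) * N + i) = (-1) ^ (j * s) * κ⁻¹ := by
      rw [inv_pow, hA, mul_inv, inv_eq_of_mul_eq_one_left (hsq s)]
    push_cast
    simp only [mul_pow, ← C_pow, hA, hA', hB, C_mul]
    have hC : (C ((-1 : ℂ) ^ (j * s)) : R2) * C ((-1) ^ (j * s)) = 1 := by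
      rw [← C_mul, hsq, C_1]
    have hC2 : (C κ⁻¹ : R2) * C κ = 1 := by
      rw [← C_mul, inv_mul_cancel₀ hκ, C_1]
    linear_combination (C (a s : ℂ) * wP ^ ((m + n - s) * N + i) * zP ^ (N * s)) *
      (C κ⁻¹ * C κ * hC + hC2)
end
end

section
/- Assume n ≤ m and let i be an integer with 1 ≤ i ≤ 2N−1 and i ≠ N. Then the (m+n)×(m+n) complex matrix A₁ (obtained from the matrix A = A(i) by deleting its row 0 and column 0) has nonzero determinant: det A₁ ≠ 0. -/
open MvPolynomial Finset

noncomputable section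

/-- `cₛ = (m+n−2s)·N + i`, as a complex number. -/
def cVal (N m n i s : ℕ) : ℂ := ((m : ℂ) + n - 2 * s) * N + i

/-- The scalar entry of the matrix `A = A(i)` in row `t ≥ 1` and column `s` (both `0`-based):
rows `1,…,n` have entries `cₛ^{2t−1}` at even `s` and `0` at odd `s`;
rows `n+1,…,2n` have entries `cₛ^{2(t−n)−1}` at odd `s` and `0` at even `s`;
rows `2n+1,…,n+m` have entries `cₛ^{2(t−n)−1}`. -/
def Aentry (N m n i : ℕ) (t s : ℕ) : ℂ :=
  if t ≤ n then (if Even s then cVal N m n i s ^ (2 * t - 1) else 0)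
  else if t ≤ 2 * n then (if ¬ Even s then cVal N m n i s ^ (2 * (t - n) - 1) else 0)
  else cVal N m n i s ^ (2 * (t - n) - 1)

/-- The matrix `A₁`: the matrix `A(i)` with row `0` and column `0` deleted. -/
def A1mat (N m n i : ℕ) : Matrix (Fin (m + n)) (Fin (m + n)) ℂ :=
  Matrix.of fun t s => Aentry N m n i ((t : ℕ) + 1) ((s : ℕ) + 1)

/-- The full `(m+n+1)×(m+n+1)` matrix `A = A(i)` over `R`: row `0` consists of the
monomials `z^{(m+n−s)N+i}·w^{Ns}`, the remaining rows are the scalar rows. -/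
def Amat (N m n i : ℕ) : Matrix (Fin (m + n + 1)) (Fin (m + n + 1)) R2 :=
  Matrix.of fun t s =>
    if (t : ℕ) = 0 then zP ^ ((m + n - (s : ℕ)) * N + i) * wP ^ (N * (s : ℕ))
    else C (Aentry N m n i (t : ℕ) (s : ℕ))

/-- The matrix `Ā`: `A` with row `0` replaced by the monomials `w^{(m+n−s)N+i}·z^{Ns}`. -/
def AmatBar (N m n i : ℕ) : Matrix (Fin (m + n + 1)) (Fin (m + n + 1)) R2 :=
  Matrix.of fun t s =>
    if (t : ℕ) = 0 then wP ^ ((m + n - (s : ℕ)) * N + i) * zP ^ (N * (s : ℕ))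
    else C (Aentry N m n i (t : ℕ) (s : ℕ))

/-- The Wronskian-type polynomial attached to a vector `v` and nodes `c`. -/
def Tpoly (M : ℕ) (c v : Fin M → ℂ) : Polynomial ℂ :=
  ∑ s : Fin M, ∑ t : Fin M,
    Polynomial.C (v s * v t * (c s + c t)) * Polynomial.X ^ ((t : ℕ) + (M - 1 - (s : ℕ)))

lemma moment_mono (M m : ℕ) (c v : Fin M → ℂ)
    (h : ∀ a, a < 2 * m → Odd a → ∑ s, v s * c s ^ a = 0) (k : ℕ) (hk : k < 2 * m) :
    ∑ s, ∑ t, v s * v t * (c s + c t) * (c s - c t) ^ k = 0 := by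
  rcases Nat.even_or_odd k with he | ho
  · have hab : ∀ a b, a + b = k + 1 → ∑ s, ∑ t, (v s * c s ^ a) * (v t * c t ^ b) = 0 := by
      intro a b hab
      rw [← Finset.sum_mul_sum]
      obtain ⟨r, hr⟩ := he
      rcases Nat.even_or_odd a with ha | ha
      · have hb : Odd b := by
          obtain ⟨q, hq⟩ := ha
          exact ⟨r - q, by omega⟩
        rw [h b (by omega) hb, mul_zero]
      · rw [h a (by omega) ha, zero_mul]
    have : ∀ s t, v s * v t * (c s + c t) * (c s - c t) ^ k =
        ∑ j ∈ Finset.range (k + 1), (((-1) ^ (k - j) * (k.choose j : ℂ)) *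
          ((v s * c s ^ (j + 1)) * (v t * c t ^ (k - j))) +
          ((-1) ^ (k - j) * (k.choose j : ℂ)) *
          ((v s * c s ^ j) * (v t * c t ^ (k - j + 1)))) := by
      intro s t
      rw [sub_eq_add_neg, add_pow, Finset.mul_sum]
      refine Finset.sum_congr rfl fun j _ => ?_
      rw [neg_pow (c t)]
      ring
    simp_rw [this]
    have h2 : ∀ s, (∑ t, ∑ j ∈ Finset.range (k + 1),
          (((-1) ^ (k - j) * (k.choose j : ℂ)) *
          ((v s * c s ^ (j + 1)) * (v t * c t ^ (k - j))) +
          ((-1) ^ (k - j) * (k.choose j : ℂ)) *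
          ((v s * c s ^ j) * (v t * c t ^ (k - j + 1))))) = _ := fun s => Finset.sum_comm
    simp_rw [h2]
    rw [Finset.sum_comm]
    refine Finset.sum_eq_zero fun j hj => ?_
    have hj' := Finset.mem_range.1 hj
    simp_rw [Finset.sum_add_distrib, ← Finset.mul_sum]
    have e1 := hab (j + 1) (k - j) (by omega)
    have e2 := hab j (k - j + 1) (by omega)
    simp_rw [← Finset.mul_sum] at e1 e2
    rw [e1, e2]; simp
  · have e : ∑ s, ∑ t, v s * v t * (c s + c t) * (c s - c t) ^ k =
        -∑ s, ∑ t, v s * v t * (c s + c t) * (c s - c t) ^ k := by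
      conv_lhs => rw [Finset.sum_comm]
      rw [← Finset.sum_neg_distrib]
      refine Finset.sum_congr rfl fun s _ => ?_
      rw [← Finset.sum_neg_distrib]
      refine Finset.sum_congr rfl fun t _ => ?_
      rw [← neg_sub (c s) (c t), ho.neg_pow]
      ring
    exact self_eq_neg.1 e

lemma moment_poly (M m : ℕ) (c v : Fin M → ℂ)
    (h : ∀ a, a < 2 * m → Odd a → ∑ s, v s * c s ^ a = 0) (q : Polynomial ℂ)
    (hq : q.natDegree < 2 * m) :
    ∑ s, ∑ t, v s * v t * (c s + c t) * q.eval (c s - c t) = 0 := by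
  simp_rw [Polynomial.eval_eq_sum_range, Finset.mul_sum]
  have h2 : ∀ s, (∑ t, ∑ k ∈ Finset.range (q.natDegree + 1),
      v s * v t * (c s + c t) * (q.coeff k * (c s - c t) ^ k)) = _ := fun s => Finset.sum_comm
  simp_rw [h2]
  rw [Finset.sum_comm]
  refine Finset.sum_eq_zero fun k hk => ?_
  have := moment_mono M m c v h k (by have := Finset.mem_range.1 hk; omega)
  calc _ = q.coeff k * ∑ s, ∑ t, v s * v t * (c s + c t) * (c s - c t) ^ k := by
        simp_rw [Finset.mul_sum]
        refine Finset.sum_congr rfl fun s _ => Finset.sum_congr rfl fun t _ => ?_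
        ring
    _ = 0 := by rw [this, mul_zero]

lemma Tpoly_dvd (M m : ℕ) (c v : Fin M → ℂ) (K : ℂ) (hK : K ≠ 0)
    (hc : ∀ s t, c s - c t = K * ((t : ℕ) - (s : ℕ)))
    (h : ∀ a, a < 2 * m → Odd a → ∑ s, v s * c s ^ a = 0) :
    (Polynomial.X - Polynomial.C 1) ^ (2 * m) ∣ Tpoly M c v := by
  by_cases hT : Tpoly M c v = 0
  · rw [hT]; exact dvd_zero _
  rcases Nat.eq_zero_or_pos m with rfl | hm
  · simp
  rw [← Polynomial.le_rootMultiplicity_iff hT]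
  have key : 2 * m - 1 < (Tpoly M c v).rootMultiplicity 1 := by
    rw [Polynomial.lt_rootMultiplicity_iff_isRoot_iterate_derivative hT]
    intro k hk
    have := moment_poly M m c v h ((descPochhammer ℂ k).comp
      (Polynomial.C K⁻¹ * Polynomial.X + Polynomial.C ((M : ℂ) - 1))) (by
        have h1 := Polynomial.natDegree_comp_le (p := descPochhammer ℂ k)
          (q := Polynomial.C K⁻¹ * Polynomial.X + Polynomial.C ((M : ℂ) - 1))
        have h2 := Polynomial.natDegree_linear_le (a := K⁻¹) (b := ((M : ℂ) - 1))
        rw [descPochhammer_natDegree] at h1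
        have h3 := Nat.mul_le_mul_left k h2
        omega)
    rw [Polynomial.IsRoot, Tpoly, ← this]
    simp only [Polynomial.iterate_derivative_sum, Polynomial.eval_finsetSum,
      Polynomial.iterate_derivative_C_mul, Polynomial.iterate_derivative_X_pow_eq_smul]
    refine Finset.sum_congr rfl fun s _ => Finset.sum_congr rfl fun t _ => ?_
    have e : (K⁻¹ * (c s - c t) + ((M : ℂ) - 1)) = (((t : ℕ) + (M - 1 - (s : ℕ)) : ℕ) : ℂ) := by
      rw [hc, inv_mul_cancel_left₀ hK]
      have h1 : ((M - 1 - (s : ℕ) : ℕ) : ℂ) = (M : ℂ) - 1 - (s : ℕ) := by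
        have := s.2
        rw [Nat.cast_sub (by omega), Nat.cast_sub (by omega)]; simp
      rw [Nat.cast_add, h1]; ring
    simp only [Polynomial.eval_comp, Polynomial.eval_add, Polynomial.eval_mul, Polynomial.eval_C,
      Polynomial.eval_X, Polynomial.eval_smul, Polynomial.eval_pow, one_pow]
    rw [e, descPochhammer_eval_eq_descFactorial]
    simp
  omega

lemma Tpoly_twist (M : ℕ) (c v : Fin M → ℂ) :
    Tpoly M c (fun s => (-1) ^ (s : ℕ) * v s) =
      Polynomial.C ((-1) ^ (M - 1)) * (Tpoly M c v).comp (-Polynomial.X) := by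
  unfold Tpoly
  simp only [Polynomial.comp, Polynomial.eval₂_finsetSum, Finset.mul_sum]
  refine Finset.sum_congr rfl fun s _ => Finset.sum_congr rfl fun t _ => ?_
  simp only [Polynomial.eval₂_mul, Polynomial.eval₂_C, Polynomial.eval₂_X_pow]
  rw [neg_pow (Polynomial.X : Polynomial ℂ)]
  have e : ((-1 : ℂ)) ^ (M - 1) * (-1) ^ ((t : ℕ) + (M - 1 - (s : ℕ)))
      = (-1) ^ (s : ℕ) * (-1) ^ (t : ℕ) := by
    have h1 : M - 1 = (s : ℕ) + (M - 1 - (s : ℕ)) := by have := s.2; omega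
    have h3 : (-1 : ℂ) ^ (M - 1) = (-1) ^ (s : ℕ) * (-1) ^ (M - 1 - (s : ℕ)) := by
      rw [← pow_add, ← h1]
    rw [h3, pow_add]
    have h2 : ((-1 : ℂ) ^ (M - 1 - (s : ℕ))) * (-1) ^ (M - 1 - (s : ℕ)) = 1 := by
      rw [← mul_pow]; simp
    linear_combination (-1) ^ (s : ℕ) * (-1) ^ (t : ℕ) * h2
  have e' : (-1 : Polynomial ℂ) ^ ((t : ℕ) + (M - 1 - (s : ℕ)))
      = Polynomial.C ((-1 : ℂ) ^ ((t : ℕ) + (M - 1 - (s : ℕ)))) := by simp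
  rw [e']
  have e3 : (-1) ^ (s : ℕ) * v s * ((-1) ^ (t : ℕ) * v t) * (c s + c t) =
    (-1 : ℂ) ^ (M - 1) * (v s * v t * (c s + c t)) * (-1) ^ ((t : ℕ) + (M - 1 - (s : ℕ))) := by
    linear_combination (-(v s * v t * (c s + c t))) * e
  rw [e3, Polynomial.C_mul, Polynomial.C_mul]
  ring

lemma Tpoly_dvd' (M n : ℕ) (c v : Fin M → ℂ) (K : ℂ) (hK : K ≠ 0)
    (hc : ∀ s t, c s - c t = K * ((t : ℕ) - (s : ℕ)))
    (h : ∀ a, a < 2 * n → Odd a → ∑ s : Fin _, ((-1) ^ (s : ℕ) * v s) * c s ^ a = 0) :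
    (Polynomial.X + Polynomial.C 1) ^ (2 * n) ∣ Tpoly M c v := by
  obtain ⟨q, hq⟩ := Tpoly_dvd M n c (fun s => (-1) ^ (s : ℕ) * v s) K hK hc h
  rw [Tpoly_twist] at hq
  have h2 := congrArg (fun p => Polynomial.C ((-1) ^ (M - 1)) * p.comp (-Polynomial.X)) hq
  simp only [Polynomial.mul_comp, Polynomial.C_comp, Polynomial.comp_assoc, Polynomial.neg_comp,
    Polynomial.X_comp, neg_neg, Polynomial.comp_X, Polynomial.pow_comp, Polynomial.sub_comp] at h2
  rw [← mul_assoc, ← Polynomial.C_mul, ← mul_pow] at h2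
  have e : (-Polynomial.X - Polynomial.C (1 : ℂ)) ^ (2 * n)
      = (Polynomial.X + Polynomial.C 1) ^ (2 * n) := by
    rw [← (even_two_mul n).neg_pow]; congr 1; ring
  rw [e] at h2
  simp only [mul_neg, mul_one, neg_neg, one_pow, Polynomial.C_1, one_mul] at h2
  rw [h2]
  exact ⟨Polynomial.C ((-1) ^ (M - 1)) * q.comp (-Polynomial.X), by rw [Polynomial.C_1]; ring⟩

lemma Tpoly_eq_zero (m n : ℕ) (c v : Fin (m + n) → ℂ) (K : ℂ) (hK : K ≠ 0)
    (hc : ∀ s t, c s - c t = K * ((t : ℕ) - (s : ℕ)))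
    (h : ∀ a, a < 2 * m → Odd a → ∑ s, v s * c s ^ a = 0)
    (h' : ∀ a, a < 2 * n → Odd a → ∑ s : Fin _, ((-1) ^ (s : ℕ) * v s) * c s ^ a = 0) :
    Tpoly (m + n) c v = 0 := by
  rcases Nat.eq_zero_or_pos (m + n) with h0 | hpos
  · have : IsEmpty (Fin (m + n)) := by rw [h0]; infer_instance
    simp [Tpoly]
  have cop : IsCoprime ((Polynomial.X - Polynomial.C (1 : ℂ)) ^ (2 * m))
      ((Polynomial.X + Polynomial.C (1 : ℂ)) ^ (2 * n)) := by
    apply IsCoprime.pow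
    have := Polynomial.isCoprime_X_sub_C_of_isUnit_sub (a := (1 : ℂ)) (b := -1)
      (by norm_num)
    simpa using this
  have hd := cop.mul_dvd (Tpoly_dvd _ m c v K hK hc h) (Tpoly_dvd' _ n c v K hK hc h')
  refine Polynomial.eq_zero_of_dvd_of_natDegree_lt hd ?_
  have e : ((Polynomial.X - Polynomial.C (1 : ℂ)) ^ (2 * m) *
      (Polynomial.X + Polynomial.C (1 : ℂ)) ^ (2 * n)).natDegree = 2 * m + 2 * n := by
    rw [Polynomial.Monic.natDegree_mul ((Polynomial.monic_X_sub_C _).pow _)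
      ((Polynomial.monic_X_add_C _).pow _), Polynomial.natDegree_pow, Polynomial.natDegree_pow,
      Polynomial.natDegree_X_sub_C, Polynomial.natDegree_X_add_C]
    ring
  rw [e]
  have : (Tpoly (m + n) c v).natDegree ≤ 2 * (m + n) - 2 := by
    unfold Tpoly
    refine Polynomial.natDegree_sum_le_of_forall_le _ _ fun s _ =>
      Polynomial.natDegree_sum_le_of_forall_le _ _ fun t _ => ?_
    refine (Polynomial.natDegree_C_mul_X_pow_le _ _).trans ?_
    have := s.2
    have := t.2
    omega
  omega

lemma vec_eq_zero (M : ℕ) (c v : Fin M → ℂ) (hcc : ∀ s t, c s + c t ≠ 0)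
    (hT : Tpoly M c v = 0) : v = 0 := by
  by_contra hv
  obtain ⟨s₁, hs₁⟩ := Function.ne_iff.1 hv
  have hne : (Finset.univ.filter fun s => v s ≠ 0).Nonempty := ⟨s₁, by simpa using hs₁⟩
  obtain ⟨a, ha, hmin⟩ := Finset.exists_min_image _ (fun s : Fin M => (s : ℕ)) hne
  obtain ⟨b, hb, hmax⟩ := Finset.exists_max_image _ (fun s : Fin M => (s : ℕ)) hne
  simp only [Finset.mem_filter, Finset.mem_univ, true_and] at ha hb hmin hmax
  have hco := congrArg (fun p => Polynomial.coeff p ((b : ℕ) + (M - 1 - (a : ℕ)))) hT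
  simp only [Tpoly, Polynomial.finsetSum_coeff, Polynomial.coeff_C_mul, Polynomial.coeff_X_pow,
    Polynomial.coeff_zero] at hco
  have zero : ∀ s t, ¬ (s = a ∧ t = b) → v s * v t * (c s + c t) *
      (if (b : ℕ) + (M - 1 - (a : ℕ)) = (t : ℕ) + (M - 1 - (s : ℕ)) then (1 : ℂ) else 0) = 0 := by
    intro s t hst
    by_cases hs : v s = 0
    · simp [hs]
    by_cases ht : v t = 0
    · simp [ht]
    rw [if_neg, mul_zero]
    intro heq
    apply hst
    have := hmin s hs
    have := hmax t ht
    have := s.2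
    have := a.2
    constructor <;> apply Fin.ext <;> omega
  rw [Finset.sum_eq_single a, Finset.sum_eq_single b] at hco
  · simp at hco
    rcases hco with (h | h) | h
    · exact ha h
    · exact hb h
    · exact hcc _ _ h
  · intro t _ ht
    exact zero _ _ fun h => ht h.2
  · simp
  · intro s _ hs
    exact Finset.sum_eq_zero fun t _ => zero _ _ fun h => hs h.1
  · simp

lemma cVal_add_ne (N m n i s t : ℕ) (hi1 : 1 ≤ i) (hi2 : i ≤ 2 * N - 1) (hiN : i ≠ N) :
    cVal N m n i s + cVal N m n i t ≠ 0 := by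
  intro h
  have h1 : (((m : ℤ) + n - s - t) * N + i : ℤ) = 0 := by
    have : (((((m : ℤ) + n - s - t) * N + i : ℤ)) : ℂ) = 0 := by
      unfold cVal at h
      push_cast
      linear_combination h / 2
    exact_mod_cast this
  set r : ℤ := (m : ℤ) + n - s - t
  have hN : (0 : ℤ) < N := by omega
  have hr1 : r < 0 := by
    by_contra hr
    have : 0 ≤ r * N := mul_nonneg (by omega) hN.le
    omega
  have hr2 : -2 < r := by
    by_contra hr
    have : r * N ≤ -2 * N := mul_le_mul_of_nonneg_right (by omega) hN.le
    omega
  have : r = -1 := by omega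
  rw [this] at h1
  omega

theorem detA1_ne_zero (N m n i : ℕ) (hN : 1 ≤ N) (hnm : n ≤ m)
    (hi1 : 1 ≤ i) (hi2 : i ≤ 2 * N - 1) (hiN : i ≠ N) :
    (A1mat N m n i).det ≠ 0 := by
  intro hdet
  obtain ⟨v, hv, hAv⟩ := Matrix.exists_mulVec_eq_zero_iff.2 hdet
  apply hv
  have hrow : ∀ t, t < m + n →
      ∑ s : Fin (m + n), Aentry N m n i (t + 1) ((s : ℕ) + 1) * v s = 0 := by
    intro t ht
    exact congrFun hAv ⟨t, ht⟩
  have hE : ∀ t, t < n → ∑ s : Fin (m + n), (if Even ((s : ℕ) + 1) then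
      cVal N m n i ((s : ℕ) + 1) ^ (2 * t + 1) else 0) * v s = 0 := by
    intro t ht
    refine Eq.trans ?_ (hrow t (by omega))
    refine Finset.sum_congr rfl fun s _ => ?_
    rw [Aentry, if_pos (show t + 1 ≤ n by omega), show 2 * (t + 1) - 1 = 2 * t + 1 by omega]
  have hO : ∀ t, t < n → ∑ s : Fin (m + n), (if ¬ Even ((s : ℕ) + 1) then
      cVal N m n i ((s : ℕ) + 1) ^ (2 * t + 1) else 0) * v s = 0 := by
    intro t ht
    refine Eq.trans ?_ (hrow (n + t) (by omega))
    refine Finset.sum_congr rfl fun s _ => ?_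
    rw [Aentry, if_neg (show ¬ n + t + 1 ≤ n by omega), if_pos (show n + t + 1 ≤ 2 * n by omega),
      show 2 * (n + t + 1 - n) - 1 = 2 * t + 1 by omega]
  refine vec_eq_zero (m + n) (fun s => cVal N m n i ((s : ℕ) + 1)) v
    (fun s t => cVal_add_ne N m n i _ _ hi1 hi2 hiN)
    (Tpoly_eq_zero m n _ v (2 * N) ?_ ?_ ?_ ?_)
  · have : (N : ℂ) ≠ 0 := by exact_mod_cast (by omega : N ≠ 0)
    simpa using this
  · intro s t
    simp only [cVal]
    push_cast
    ring
  · rintro a ha ⟨t, rfl⟩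
    by_cases htn : t < n
    · have h1 := hE t htn
      have h2 := hO t htn
      have h3 := congrArg₂ (· + ·) h1 h2
      simp only [← Finset.sum_add_distrib, add_zero] at h3
      rw [← h3]
      refine Finset.sum_congr rfl fun s _ => ?_
      by_cases hs : Even ((s : ℕ) + 1) <;> simp only [hs, if_true, if_false, not_true_eq_false, not_false_eq_true] <;> ring
    · refine Eq.trans ?_ (hrow (n + t) (by omega))
      refine Finset.sum_congr rfl fun s _ => ?_
      rw [Aentry, if_neg (show ¬ n + t + 1 ≤ n by omega), if_neg (show ¬ n + t + 1 ≤ 2 * n by omega),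
        show 2 * (n + t + 1 - n) - 1 = 2 * t + 1 by omega]
      ring
  · rintro a ha ⟨t, rfl⟩
    have h1 := hE t (by omega)
    have h2 := hO t (by omega)
    have h3 := congrArg₂ (fun x y => y - x) h1 h2
    simp only [← Finset.sum_sub_distrib, sub_zero] at h3
    rw [← h3]
    refine Finset.sum_congr rfl fun s _ => ?_
    by_cases hs : Even ((s : ℕ) + 1)
    · have : Odd (s : ℕ) := by
        rw [Nat.even_add_one] at hs; exact Nat.not_even_iff_odd.1 hs
      simp only [hs, if_true, if_false, not_true_eq_false, this.neg_one_pow]; ring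
    · have : Even (s : ℕ) := by
        rw [Nat.even_add_one, not_not] at hs; exact hs
      simp only [hs, if_false, not_false_eq_true, if_true, this.neg_one_pow]; ring
end
end
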